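/- Suppose Assumptions A1(m), A2 and A3 hold with m≥2, that condition (S′) holds (Λ₁=−Λ₁ and Dq_λ=Dq_{−λ} for all λ∈Λ₁), that τ_λ>0 for every λ∈Λ₁, and that q_λ≥κ on H_T for a constant κ>0. Then for any δ∈(0,1) there exist τ₀>0, h₀′∈(0,h₀] and a constant K₁ such that for all h∈(0,h₀′], all n=1,…,m and all smooth φ there exists an operator 𝒦∈𝔎 for which inequality (3.24.01) holds on H_T: n·Σ_{ν∈Λ}A₁(δ̄_{h,ν}φ) + n(n−1)Σ_{λ∈Λ²}(δ̄_{h,λ}φ)Q_λT_{h,λ}φ ≤ (1−δ)Σ_{λ∈Λ²}𝒬(δ̄_{h,λ}φ) + K₁Σ_{λ∈Λ}𝒬(δ̄_{h,λ}φ) + 2(1−δ)c·𝒦(Σ_{λ∈Λ²}|δ̄_{h,λ}φ|²) + K₁𝒦(Σ_{λ∈Λ}|δ̄_{h,λ}φ|²). In particular Assumption A5 is satisfied. -/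

import Mathlib

open scoped BigOperators
open MeasureTheory

noncomputable section

/-- `ℝ^d` with Euclidean norm. -/
abbrev Vec (d : ℕ) := EuclideanSpace ℝ (Fin d)

namespace GK

variable {d : ℕ}

/-- forward difference `δ_{h,λ}φ`. -/
def del (h : ℝ) (l : Vec d) (φ : Vec d → ℝ) (x : Vec d) : ℝ :=
  (φ (x + h • l) - φ x) / h

/-- symmetric second difference `Δ_{h,λ}φ`. -/
def del2 (h : ℝ) (l : Vec d) (φ : Vec d → ℝ) (x : Vec d) : ℝ :=
  (φ (x + h • l) - 2 * φ x + φ (x - h • l)) / h ^ 2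

/-- `i`-th partial derivative `D_iφ`. -/
def pd (i : Fin d) (φ : Vec d → ℝ) (x : Vec d) : ℝ :=
  fderiv ℝ φ x (EuclideanSpace.single i 1)

/-- second partial derivatives `D_{ij}φ`. -/
def pd2 (i j : Fin d) (φ : Vec d → ℝ) (x : Vec d) : ℝ :=
  iteratedFDeriv ℝ 2 φ x ![EuclideanSpace.single i 1, EuclideanSpace.single j 1]

/-- The index type for `Λ = Λ₁ ∪ Λ₂`: `Sum.inl` is an element of `Λ₁`,
`Sum.inr i` stands for the vector `ℓⁱ ∈ Λ₂`. -/
abbrev Dir (L1 : Finset (Vec d)) : Type _ := {l : Vec d // l ∈ L1} ⊕ Fin d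

/-- the subtype of elements of `Λ₁`. -/
abbrev L1t (L1 : Finset (Vec d)) := {l : Vec d // l ∈ L1}

/-- the weighted difference operator `δ̄_{h,λ}`, `λ ∈ Λ`:
`τ_λ δ_{h,λ}` on `Λ₁` and `τ₀ D_i` on `Λ₂`. -/
def dbar (h τ₀ : ℝ) (τ : Vec d → ℝ) {L1 : Finset (Vec d)} :
    Dir L1 → (Vec d → ℝ) → Vec d → ℝ
  | Sum.inl l => fun φ x => τ l.1 * del h l.1 φ x
  | Sum.inr i => fun φ x => τ₀ * pd i φ x

/-- the shift operator `T_{h,λ}`, `λ ∈ Λ`: a genuine shift on `Λ₁`, the identity on `Λ₂`. -/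
def shiftD (h : ℝ) {L1 : Finset (Vec d)} : Dir L1 → (Vec d → ℝ) → Vec d → ℝ
  | Sum.inl l => fun φ x => φ (x + h • l.1)
  | Sum.inr _ => fun φ x => φ x

/-- `δ̄_{h,λ}` for a multivector `λ ∈ Λᵏ`. -/
def dbarT (h τ₀ : ℝ) (τ : Vec d → ℝ) {L1 : Finset (Vec d)} {k : ℕ}
    (lam : Fin k → Dir L1) (φ : Vec d → ℝ) : Vec d → ℝ :=
  (List.ofFn lam).foldr (fun a ψ => dbar h τ₀ τ a ψ) φ

/-- `T_{h,λ}` for a multivector `λ ∈ Λᵏ`. -/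
def shiftT (h : ℝ) {L1 : Finset (Vec d)} {k : ℕ}
    (lam : Fin k → Dir L1) (φ : Vec d → ℝ) : Vec d → ℝ :=
  (List.ofFn lam).foldr (fun a ψ => shiftD h a ψ) φ

/-- `|Λ₁|² = Σ_{λ∈Λ₁} |λ|²`. -/
def normL1sq (L1 : Finset (Vec d)) : ℝ := ∑ l ∈ L1, ‖l‖ ^ 2

/-- `‖Λ₁‖² = Σ_{λ∈Λ₁} |τ_λ λ|²`. -/
def wnormL1sq (L1 : Finset (Vec d)) (τ : Vec d → ℝ) : ℝ := ∑ l ∈ L1, ‖τ l • l‖ ^ 2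

/-- the operator `L⁰_h` (at a fixed time, `qt μ`, `pt μ` being the coefficients
as functions of `x`). -/
def L0 (h : ℝ) (L1 : Finset (Vec d)) (qt pt : Vec d → Vec d → ℝ)
    (φ : Vec d → ℝ) (x : Vec d) : ℝ :=
  h⁻¹ * ∑ l ∈ L1, qt l x * del h l φ x + ∑ l ∈ L1, pt l x * del h l φ x

/-- the quadratic form `𝒬(φ) = Σ_{μ∈Λ₁} χ_μ (δ_{h,μ}φ)²`, `χ_μ = q_μ + h p_μ`. -/
def Qform (h : ℝ) (L1 : Finset (Vec d)) (qt pt : Vec d → Vec d → ℝ)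
    (φ : Vec d → ℝ) (x : Vec d) : ℝ :=
  ∑ l ∈ L1, (qt l x + h * pt l x) * (del h l φ x) ^ 2

/-- `Q_μ φ = h⁻¹ Σ_{λ∈Λ₁} (δ̄_{h,μ} q_λ) δ_{h,λ}φ` for a multivector `μ`. -/
def Qmu (h τ₀ : ℝ) (τ : Vec d → ℝ) (L1 : Finset (Vec d)) {k : ℕ}
    (qt : Vec d → Vec d → ℝ) (lam : Fin k → Dir L1) (φ : Vec d → ℝ) (x : Vec d) : ℝ :=
  h⁻¹ * ∑ l ∈ L1, dbarT h τ₀ τ lam (qt l) x * del h l φ x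

/-- `P_μ φ = Σ_{λ∈Λ₁} (δ̄_{h,μ} p_λ) δ_{h,λ}φ` for a multivector `μ`. -/
def Pmu (h τ₀ : ℝ) (τ : Vec d → ℝ) (L1 : Finset (Vec d)) {k : ℕ}
    (pt : Vec d → Vec d → ℝ) (lam : Fin k → Dir L1) (φ : Vec d → ℝ) (x : Vec d) : ℝ :=
  ∑ l ∈ L1, dbarT h τ₀ τ lam (pt l) x * del h l φ x

/-- `L⁰_μ = Q_μ + P_μ`. -/
def L0mu (h τ₀ : ℝ) (τ : Vec d → ℝ) (L1 : Finset (Vec d)) {k : ℕ}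
    (qt pt : Vec d → Vec d → ℝ) (lam : Fin k → Dir L1) (φ : Vec d → ℝ) (x : Vec d) : ℝ :=
  Qmu h τ₀ τ L1 qt lam φ x + Pmu h τ₀ τ L1 pt lam φ x

/-- `A₁(φ) = 2 Σ_{λ∈Λ} (δ̄_{h,λ}φ) L⁰_λ T_{h,λ}φ`. -/
def A1form (h τ₀ : ℝ) (τ : Vec d → ℝ) (L1 : Finset (Vec d))
    (qt pt : Vec d → Vec d → ℝ) (φ : Vec d → ℝ) (x : Vec d) : ℝ :=
  2 * ∑ a : Dir L1, dbar h τ₀ τ a φ x * L0mu h τ₀ τ L1 qt pt ![a] (shiftD h a φ) x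

/-- membership in the class `𝔎` of bounded operators on bounded Borel functions
preserving the cone of nonnegative functions and with `𝒦1 ≤ 1`. -/
def MemFrakK (K : (Vec d → ℝ) → Vec d → ℝ) : Prop :=
  (∀ φ : Vec d → ℝ, Measurable φ → Bornology.IsBounded (Set.range φ) →
      Measurable (K φ) ∧ Bornology.IsBounded (Set.range (K φ))) ∧
  (∀ φ : Vec d → ℝ, (∀ x, 0 ≤ φ x) → ∀ x, 0 ≤ K φ x) ∧
  ∀ x, K (fun _ => (1 : ℝ)) x ≤ 1

/-- inequality (3.24.1) of Assumption 2.4 (A4), at a fixed time. -/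
def IneqA4 (h τ₀ : ℝ) (τ : Vec d → ℝ) (L1 : Finset (Vec d))
    (qt pt : Vec d → Vec d → ℝ) (ct : Vec d → ℝ) (δ K₁ : ℝ) (m : ℕ)
    (K : (Vec d → ℝ) → Vec d → ℝ) (φ : Vec d → ℝ) (x : Vec d) : Prop :=
  (m : ℝ) * A1form h τ₀ τ L1 qt pt φ x ≤
    (1 - δ) * (∑ a : Dir L1, Qform h L1 qt pt (dbar h τ₀ τ a φ) x)
    + K₁ * Qform h L1 qt pt φ x
    + 2 * (1 - δ) * ct x * K (fun y => ∑ a : Dir L1, (dbar h τ₀ τ a φ y) ^ 2) x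

/-- inequality (3.24.01) of Assumption 2.5 (A5), at a fixed time. -/
def IneqA5 (h τ₀ : ℝ) (τ : Vec d → ℝ) (L1 : Finset (Vec d))
    (qt pt : Vec d → Vec d → ℝ) (ct : Vec d → ℝ) (δ K₁ : ℝ) (n : ℕ)
    (K : (Vec d → ℝ) → Vec d → ℝ) (φ : Vec d → ℝ) (x : Vec d) : Prop :=
  (n : ℝ) * (∑ a : Dir L1, A1form h τ₀ τ L1 qt pt (dbar h τ₀ τ a φ) x)
  + (n : ℝ) * ((n : ℝ) - 1) *
      (∑ lam : Fin 2 → Dir L1,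
        dbarT h τ₀ τ lam φ x * Qmu h τ₀ τ L1 qt lam (shiftT h lam φ) x)
  ≤ (1 - δ) * (∑ lam : Fin 2 → Dir L1, Qform h L1 qt pt (dbarT h τ₀ τ lam φ) x)
    + K₁ * (∑ a : Dir L1, Qform h L1 qt pt (dbar h τ₀ τ a φ) x)
    + 2 * (1 - δ) * ct x *
        K (fun y => ∑ lam : Fin 2 → Dir L1, (dbarT h τ₀ τ lam φ y) ^ 2) x
    + K₁ * K (fun y => ∑ a : Dir L1, (dbar h τ₀ τ a φ y) ^ 2) x

/-- regularity and boundedness of the coefficients `q, p, c` (the `q,p,c` part of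
Assumption 2.1 (A1(m))). -/
def CoefReg (T : ℝ) (L1 : Finset (Vec d)) (m : ℕ)
    (q p : Vec d → ℝ → Vec d → ℝ) (c : ℝ → Vec d → ℝ) (M : ℕ → ℝ) : Prop :=
  (∀ l ∈ L1, ∀ t ∈ Set.Icc (0 : ℝ) T, ContDiff ℝ (m : ℕ∞) (q l t) ∧ ContDiff ℝ (m : ℕ∞) (p l t)) ∧
  (∀ t ∈ Set.Icc (0 : ℝ) T, ContDiff ℝ (m : ℕ∞) (c t)) ∧
  (∀ k ≤ m, ∀ l ∈ L1,
    ContinuousOn (fun tx : ℝ × Vec d => iteratedFDeriv ℝ k (q l tx.1) tx.2)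
      (Set.Icc (0 : ℝ) T ×ˢ Set.univ) ∧
    ContinuousOn (fun tx : ℝ × Vec d => iteratedFDeriv ℝ k (p l tx.1) tx.2)
      (Set.Icc (0 : ℝ) T ×ˢ Set.univ)) ∧
  (∀ k ≤ m,
    ContinuousOn (fun tx : ℝ × Vec d => iteratedFDeriv ℝ k (c tx.1) tx.2)
      (Set.Icc (0 : ℝ) T ×ˢ Set.univ)) ∧
  (∀ k ≤ m, ∀ t ∈ Set.Icc (0 : ℝ) T, ∀ x,
    (∑ l ∈ L1, (‖iteratedFDeriv ℝ k (q l t) x‖ ^ 2 + ‖iteratedFDeriv ℝ k (p l t) x‖ ^ 2))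
      + ‖iteratedFDeriv ℝ k (c t) x‖ ^ 2 ≤ (M k) ^ 2)

/-- regularity of the free terms `f, g` (the `f,g` part of Assumption 2.1 (A1(m))). -/
def FreeReg (T : ℝ) (m : ℕ) (f : ℝ → Vec d → ℝ) (g : Vec d → ℝ) : Prop :=
  (∀ t ∈ Set.Icc (0 : ℝ) T, ContDiff ℝ (m : ℕ∞) (f t)) ∧
  (∀ k ≤ m,
    ContinuousOn (fun tx : ℝ × Vec d => iteratedFDeriv ℝ k (f tx.1) tx.2)
      (Set.Icc (0 : ℝ) T ×ˢ Set.univ)) ∧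
  ContDiff ℝ (m : ℕ∞) g

/-- `u` is a bounded continuous solution of the integral equation (2.1). -/
def IsSol (h T : ℝ) (L1 : Finset (Vec d)) (q p : Vec d → ℝ → Vec d → ℝ)
    (c : ℝ → Vec d → ℝ) (f : ℝ → Vec d → ℝ) (g : Vec d → ℝ)
    (u : ℝ → Vec d → ℝ) : Prop :=
  (∃ B, ∀ t ∈ Set.Icc (0 : ℝ) T, ∀ x, |u t x| ≤ B) ∧
  ContinuousOn (fun tx : ℝ × Vec d => u tx.1 tx.2) (Set.Icc (0 : ℝ) T ×ˢ Set.univ) ∧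
  ∀ t ∈ Set.Icc (0 : ℝ) T, ∀ x,
    u t x = g x + ∫ s in (0 : ℝ)..t,
      (L0 h L1 (fun l => q l s) (fun l => p l s) (u s) x - c s x * u s x + f s x)

/-- `sup_{H_T} ψ`. -/
def supHT (T : ℝ) (ψ : ℝ → Vec d → ℝ) : ℝ :=
  sSup {r : ℝ | ∃ t ∈ Set.Icc (0 : ℝ) T, ∃ x, r = ψ t x}

/-- `F_m = Σ_{k ≤ m} sup_{H_T} |Dᵏf|`. -/
def Fnorm (T : ℝ) (m : ℕ) (f : ℝ → Vec d → ℝ) : ℝ :=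
  ∑ k ∈ Finset.range (m + 1), supHT T fun t x => ‖iteratedFDeriv ℝ k (f t) x‖

/-- `G_m = Σ_{k ≤ m} sup_{ℝ^d} |Dᵏg|`. -/
def Gnorm (m : ℕ) (g : Vec d → ℝ) : ℝ :=
  ∑ k ∈ Finset.range (m + 1), sSup (Set.range fun x => ‖iteratedFDeriv ℝ k g x‖)

end GK

/-!
One can take `𝒦` to be the identity. Under (S′) the differences `δ̄_μ q_λ` are even in `λ`, so
pairing `λ` with `-λ` gives `h⁻¹ ∑ δ̄_μ q_λ δ_λ ψ = ½ ∑ δ̄_μ q_λ Δ_λ ψ` and the singular factor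
`h⁻¹` disappears. As `χ` is bounded below and `τ` does not vanish, `𝒬` controls every term in
which some `δ_λ`, `λ ∈ Λ₁`, falls on `δ̄φ` or `δ̄δ̄φ`. The only other quantities are the
`δ̄_a δ̄_b φ` with `a, b ∈ Λ₂`; they are always paired with a coefficient difference in the
direction `a`, which carries a factor `τ₀`. For small `τ₀`, Young's inequality absorbs them in the
term with `c ≥ c₀ > 0`.
-/

namespace GK

variable {d : ℕ} {L1 : Finset (Vec d)} {h τ₀ : ℝ} {τ : Vec d → ℝ}

section Differences

lemma norm_inv_smul_sub_le {E F : Type*} [NormedAddCommGroup E] [NormedSpace ℝ E]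
    [NormedAddCommGroup F] [NormedSpace ℝ F] {f : E → F} {B : ℝ} (hf : Differentiable ℝ f)
    (hB : ∀ x, ‖fderiv ℝ f x‖ ≤ B) (h : ℝ) (l x : E) :
    ‖h⁻¹ • (f (x + h • l) - f x)‖ ≤ ‖l‖ * B := by
  have hB₀ : 0 ≤ B := (norm_nonneg _).trans (hB x)
  have hmv : ‖f (x + h • l) - f x‖ ≤ B * ‖x + h • l - x‖ :=
    convex_univ.norm_image_sub_le_of_norm_fderiv_le (fun y _ => hf y) (fun y _ => hB y)
      (Set.mem_univ x) (Set.mem_univ _)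
  rw [add_sub_cancel_left, norm_smul] at hmv
  calc ‖h⁻¹ • (f (x + h • l) - f x)‖
      ≤ ‖h‖⁻¹ * (B * (‖h‖ * ‖l‖)) := by rw [norm_smul, norm_inv]; gcongr
    _ = ‖h‖⁻¹ * ‖h‖ * (‖l‖ * B) := by ring
    _ ≤ ‖l‖ * B := mul_le_of_le_one_left (by positivity) inv_mul_le_one

lemma hasFDerivAt_del {f : Vec d → ℝ} (hf : Differentiable ℝ f) (h : ℝ) (l x : Vec d) :
    HasFDerivAt (del h l f) (h⁻¹ • (fderiv ℝ f (x + h • l) - fderiv ℝ f x)) x := by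
  have hshift : HasFDerivAt (fun y => f (y + h • l)) (fderiv ℝ f (x + h • l)) x :=
    (hasFDerivAt_comp_add_right (h • l)).2 (hf _).hasFDerivAt
  refine ((hshift.sub (hf x).hasFDerivAt).const_smul h⁻¹).congr_of_eventuallyEq
    (.of_forall fun y => ?_)
  exact div_eq_inv_mul _ _

lemma del_const_mul (s : ℝ) (l : Vec d) (f : Vec d → ℝ) :
    del h l (fun y => s * f y) = fun x => s * del h l f x := by
  funext x
  simp only [del]
  ring

lemma pd_del {f : Vec d → ℝ} (hf : Differentiable ℝ f) (l : Vec d) (i : Fin d) (x : Vec d) :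
    pd i (del h l f) x = del h l (pd i f) x := by
  simp only [pd, (hasFDerivAt_del hf h l x).fderiv, del, smul_apply,
    sub_apply, smul_eq_mul, div_eq_inv_mul]

lemma del_shift (hh : h ≠ 0) (l a : Vec d) (v : Vec d → ℝ) (x : Vec d) :
    del h l (fun y => v (y + h • a)) x = del h l v x + h * del h l (del h a v) x := by
  simp only [del]
  field_simp
  ring

lemma inv_mul_del_add_del_neg (l : Vec d) (v : Vec d → ℝ) (x : Vec d) :
    h⁻¹ * (del h l v x + del h (-l) v x) = del2 h l v x := by
  simp only [del, del2, smul_neg, ← sub_eq_add_neg]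
  ring

lemma del2_eq_neg_del_del_neg (l : Vec d) (v : Vec d → ℝ) (x : Vec d) :
    del2 h l v x = -del h l (del h (-l) v) x := by
  simp only [del, del2, smul_neg, ← sub_eq_add_neg, add_sub_cancel_right]
  ring

lemma del2_shift (hh : h ≠ 0) (l a : Vec d) (v : Vec d → ℝ) (x : Vec d) :
    del2 h l (fun y => v (y + h • a)) x =
      -del h l (del h (-l) v) x + del h l (del h a v) x + del h (-l) (del h a v) x := by
  rw [← inv_mul_del_add_del_neg, del_shift hh, del_shift hh, ← del2_eq_neg_del_del_neg,
    ← inv_mul_del_add_del_neg]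
  field_simp
  ring

lemma inv_mul_sum_mul_del_eq (hneg : ∀ l ∈ L1, -l ∈ L1) {g : Vec d → ℝ}
    (hg : ∀ l ∈ L1, g l = g (-l)) (ψ : Vec d → ℝ) (x : Vec d) :
    h⁻¹ * ∑ l ∈ L1, g l * del h l ψ x = 1 / 2 * ∑ l ∈ L1, g l * del2 h l ψ x := by
  have hreflect : ∑ l ∈ L1, g l * del h l ψ x = ∑ l ∈ L1, g l * del h (-l) ψ x := by
    refine Finset.sum_nbij' (- ·) (- ·) hneg hneg (by simp) (by simp) fun l hl => ?_
    rw [neg_neg, hg l hl]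
  calc h⁻¹ * ∑ l ∈ L1, g l * del h l ψ x
      = 1 / 2 * (h⁻¹ * (∑ l ∈ L1, g l * del h l ψ x + ∑ l ∈ L1, g l * del h (-l) ψ x)) := by
        rw [← hreflect]; ring
    _ = 1 / 2 * ∑ l ∈ L1, g l * del2 h l ψ x := by
        simp only [← inv_mul_del_add_del_neg, ← Finset.sum_add_distrib, Finset.mul_sum]
        refine Finset.sum_congr rfl fun l _ => ?_
        ring

end Differences

section Shifts

lemma shiftD_inl (hh : h ≠ 0) (a : L1t L1) (v : Vec d → ℝ) :
    shiftD h (Sum.inl a : Dir L1) v = fun y => v y + h * del h a.1 v y := by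
  funext y
  simp only [shiftD, del]
  field_simp
  ring

lemma del2_shiftD_add_mul (a : Dir L1) (s : ℝ) (l : Vec d) (v w : Vec d → ℝ) (x : Vec d) :
    del2 h l (shiftD h a (fun y => v y + s * w y)) x =
      del2 h l (shiftD h a v) x + s * del2 h l (shiftD h a w) x := by
  cases a <;> simp only [del2, shiftD] <;> ring

variable {v : Vec d → ℝ} {x : Vec d} {R R' : ℝ}

lemma abs_del_shiftD_le (hh : 0 < h) (hh1 : h ≤ 1) (hR : ∀ u ∈ L1, |del h u v x| ≤ R)
    (hR' : ∀ u ∈ L1, ∀ w ∈ L1, |del h u (del h w v) x| ≤ R') (a : Dir L1) {l : Vec d}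
    (hl : l ∈ L1) : |del h l (shiftD h a v) x| ≤ R + R' := by
  have hR'₀ : 0 ≤ R' := (abs_nonneg _).trans (hR' l hl l hl)
  rcases a with a | _
  · simp only [shiftD]
    rw [del_shift hh.ne']
    refine (abs_add_le _ _).trans (add_le_add (hR l hl) ?_)
    rw [abs_mul, abs_of_pos hh]
    exact (mul_le_of_le_one_left (abs_nonneg _) hh1).trans (hR' l hl a.1 a.2)
  · exact (hR l hl).trans (le_add_of_nonneg_right hR'₀)

lemma abs_del2_shiftD_le (hh : h ≠ 0) (hneg : ∀ l ∈ L1, -l ∈ L1)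
    (hR : ∀ u ∈ L1, ∀ w ∈ L1, |del h u (del h w v) x| ≤ R) (a : Dir L1) {l : Vec d}
    (hl : l ∈ L1) : |del2 h l (shiftD h a v) x| ≤ 3 * R := by
  have hll := hR l hl (-l) (hneg l hl)
  rcases a with a | _
  · have hla := hR l hl a.1 a.2
    have hnla := hR (-l) (hneg l hl) a.1 a.2
    simp only [shiftD]
    rw [del2_shift hh]
    refine (abs_add_three _ _ _).trans ?_
    rw [abs_neg]
    linarith
  · simp only [shiftD]
    rw [del2_eq_neg_del_del_neg, abs_neg]
    linarith [abs_nonneg (del h l (del h (-l) v) x)]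

lemma abs_del2_shiftD_shiftD_le (hh : 0 < h) (hh1 : h ≤ 1) (hneg : ∀ l ∈ L1, -l ∈ L1)
    (hR : ∀ u ∈ L1, ∀ w ∈ L1, |del h u (del h w v) x| ≤ R)
    (hR' : ∀ u ∈ L1, ∀ w ∈ L1, ∀ z ∈ L1, |del h u (del h w (del h z v)) x| ≤ R')
    (a b : Dir L1) {l : Vec d} (hl : l ∈ L1) :
    |del2 h l (shiftD h a (shiftD h b v)) x| ≤ 3 * (R + R') := by
  have hR'₀ : 0 ≤ R' := (abs_nonneg _).trans (hR' l hl l hl l hl)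
  have hv := abs_del2_shiftD_le hh.ne' hneg hR a hl
  rcases b with b | _
  · have hbv := abs_del2_shiftD_le hh.ne' hneg (fun u hu w hw => hR' u hu w hw b.1 b.2) a hl
    rw [shiftD_inl hh.ne', del2_shiftD_add_mul]
    refine (abs_add_le _ _).trans ?_
    rw [abs_mul, abs_of_pos hh]
    linarith [mul_le_of_le_one_left (abs_nonneg (del2 h l (shiftD h a (del h b.1 v)) x)) hh1]
  · exact hv.trans (by linarith)

end Shifts

section WeightedDifferences

/-- The length of the vector along which `dbar` differentiates. -/
def dirNorm (τ₀ : ℝ) (τ : Vec d → ℝ) : Dir L1 → ℝ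
  | Sum.inl l => ‖τ l.1 • l.1‖
  | Sum.inr _ => |τ₀|

lemma dirNorm_nonneg (a : Dir L1) : 0 ≤ dirNorm τ₀ τ a := by
  cases a
  exacts [norm_nonneg _, abs_nonneg _]

lemma dbarT_one (a : Dir L1) (f : Vec d → ℝ) :
    dbarT h τ₀ τ ![a] f = dbar h τ₀ τ a f := by
  simp [dbarT]

lemma dbarT_two (lam : Fin 2 → Dir L1) (f : Vec d → ℝ) :
    dbarT h τ₀ τ lam f = dbar h τ₀ τ (lam 0) (dbar h τ₀ τ (lam 1) f) := by
  simp [dbarT, List.ofFn_succ]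

lemma shiftT_two (lam : Fin 2 → Dir L1) (f : Vec d → ℝ) :
    shiftT h lam f = shiftD h (lam 0) (shiftD h (lam 1) f) := by
  simp [shiftT, List.ofFn_succ]

variable {f g : Vec d → ℝ} {B : ℝ}

lemma abs_dbar_le (hf : Differentiable ℝ f) (hB : ∀ x, ‖fderiv ℝ f x‖ ≤ B) (a : Dir L1)
    (x : Vec d) : |dbar h τ₀ τ a f x| ≤ dirNorm τ₀ τ a * B := by
  rcases a with l | i
  · simp only [dbar, dirNorm, del]
    rw [abs_mul, norm_smul, Real.norm_eq_abs, mul_assoc, div_eq_inv_mul]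
    gcongr
    exact norm_inv_smul_sub_le hf hB h l.1 x
  · simp only [dbar, dirNorm, pd]
    rw [abs_mul]
    gcongr
    simpa using (fderiv ℝ f x).le_of_opNorm_le (hB x) (EuclideanSpace.single i (1 : ℝ))

lemma exists_hasFDerivAt_dbar_norm_le (hf : Differentiable ℝ f)
    (hf' : Differentiable ℝ (fderiv ℝ f)) (hB : ∀ x, ‖fderiv ℝ (fderiv ℝ f) x‖ ≤ B)
    (a : Dir L1) (x : Vec d) :
    ∃ f' : Vec d →L[ℝ] ℝ, HasFDerivAt (dbar h τ₀ τ a f) f' x ∧ ‖f'‖ ≤ dirNorm τ₀ τ a * B := by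
  rcases a with l | i
  · refine ⟨_, (hasFDerivAt_del hf h l.1 x).const_mul (τ l.1), ?_⟩
    simp only [dirNorm]
    rw [norm_smul (τ l.1), norm_smul (τ l.1), mul_assoc]
    gcongr
    exact norm_inv_smul_sub_le hf' hB h l.1 x
  · have hpd : HasFDerivAt (fun y => fderiv ℝ f y (EuclideanSpace.single i 1))
        ((fderiv ℝ (fderiv ℝ f) x).flip (EuclideanSpace.single i 1)) x := by
      simpa using (hf' x).hasFDerivAt.clm_apply
        (hasFDerivAt_const (EuclideanSpace.single i (1 : ℝ)) x)
    refine ⟨_, hpd.const_mul τ₀, ?_⟩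
    simp only [dirNorm]
    rw [norm_smul, Real.norm_eq_abs]
    gcongr
    have hflip : ‖(fderiv ℝ (fderiv ℝ f) x).flip‖ ≤ B := by
      rw [ContinuousLinearMap.opNorm_flip]
      exact hB x
    simpa using (fderiv ℝ (fderiv ℝ f) x).flip.le_of_opNorm_le hflip
      (EuclideanSpace.single i (1 : ℝ))

lemma abs_dbar_dbar_le (hf : ContDiff ℝ 2 f) (hB : ∀ x, ‖fderiv ℝ (fderiv ℝ f) x‖ ≤ B)
    (a b : Dir L1) (x : Vec d) :
    |dbar h τ₀ τ a (dbar h τ₀ τ b f) x| ≤ dirNorm τ₀ τ a * (dirNorm τ₀ τ b * B) := by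
  have hf' : Differentiable ℝ (fderiv ℝ f) :=
    (hf.fderiv_right (m := 1) (by norm_num)).differentiable (by norm_num)
  choose f' hderiv hle using
    exists_hasFDerivAt_dbar_norm_le (h := h) (τ₀ := τ₀) (τ := τ)
      (hf.differentiable (by norm_num)) hf' hB b
  exact abs_dbar_le (fun y => (hderiv y).differentiableAt)
    (fun y => (hderiv y).fderiv ▸ hle y) a x

lemma dbar_eq_of_fderiv_eq (hf : Differentiable ℝ f) (hg : Differentiable ℝ g)
    (hfg : ∀ x, fderiv ℝ f x = fderiv ℝ g x) (a : Dir L1) :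
    dbar h τ₀ τ a f = dbar h τ₀ τ a g := by
  funext x
  rcases a with l | i
  · have hconst := is_const_of_fderiv_eq_zero (hf.sub hg)
      (fun y => by rw [fderiv_sub (hf y) (hg y), hfg y, sub_self]) (x + h • l.1) x
    simp only [Pi.sub_apply] at hconst
    simp only [dbar, del, sub_eq_sub_iff_sub_eq_sub.1 hconst]
  · simp only [dbar, pd, hfg x]

lemma dbar_inr_dbar_inl (hf : Differentiable ℝ f) (i : Fin d) (l : L1t L1) (x : Vec d) :
    dbar h τ₀ τ (Sum.inr i : Dir L1) (dbar h τ₀ τ (Sum.inl l : Dir L1) f) x =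
      dbar h τ₀ τ (Sum.inl l : Dir L1) (dbar h τ₀ τ (Sum.inr i : Dir L1) f) x := by
  have hpd : pd i (fun y => τ l.1 * del h l.1 f y) x = τ l.1 * pd i (del h l.1 f) x := by
    simp only [pd, fderiv_const_mul (hasFDerivAt_del hf h l.1 x).differentiableAt,
      smul_apply, smul_eq_mul]
  simp only [dbar]
  rw [hpd, pd_del hf, del_const_mul]
  ring

/-- A number at least `1` that dominates `|τ l|`, `|τ l|⁻¹` and `‖τ l • l‖` for all `l ∈ Λ₁`. -/
def weightBound (L1 : Finset (Vec d)) (τ : Vec d → ℝ) : ℝ :=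
  1 + ∑ l ∈ L1, (|τ l| + |τ l|⁻¹ + ‖τ l • l‖)

lemma one_le_weightBound : 1 ≤ weightBound L1 τ :=
  le_add_of_nonneg_right (Finset.sum_nonneg fun _ _ => by positivity)

lemma weightBound_pos : 0 < weightBound L1 τ :=
  zero_lt_one.trans_le one_le_weightBound

lemma add_le_weightBound {l : Vec d} (hl : l ∈ L1) :
    |τ l| + |τ l|⁻¹ + ‖τ l • l‖ ≤ weightBound L1 τ :=
  (Finset.single_le_sum (f := fun l : Vec d => |τ l| + |τ l|⁻¹ + ‖τ l • l‖)
    (fun _ _ => by positivity) hl).trans (le_add_of_nonneg_left zero_le_one)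

lemma abs_le_weightBound {l : Vec d} (hl : l ∈ L1) : |τ l| ≤ weightBound L1 τ := by
  linarith [add_le_weightBound (τ := τ) hl, norm_nonneg (τ l • l), inv_nonneg.2 (abs_nonneg (τ l))]

lemma inv_abs_le_weightBound {l : Vec d} (hl : l ∈ L1) : |τ l|⁻¹ ≤ weightBound L1 τ := by
  linarith [add_le_weightBound (τ := τ) hl, norm_nonneg (τ l • l), abs_nonneg (τ l)]

lemma dirNorm_le_weightBound (hτ₀ : |τ₀| ≤ 1) (a : Dir L1) :
    dirNorm τ₀ τ a ≤ weightBound L1 τ := by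
  rcases a with l | _
  · simp only [dirNorm]
    linarith [add_le_weightBound (τ := τ) l.2, abs_nonneg (τ l.1),
      inv_nonneg.2 (abs_nonneg (τ l.1))]
  · exact hτ₀.trans one_le_weightBound

lemma abs_del_del_le_mul (hτ : ∀ l ∈ L1, τ l ≠ 0) (u : Vec d) {w : Vec d} (hw : w ∈ L1)
    (v : Vec d → ℝ) (x : Vec d) :
    |del h u (del h w v) x| ≤
      weightBound L1 τ * |del h u (dbar h τ₀ τ (Sum.inl ⟨w, hw⟩ : Dir L1) v) x| := by
  have hdbar : del h u (dbar h τ₀ τ (Sum.inl ⟨w, hw⟩ : Dir L1) v) x =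
      τ w * del h u (del h w v) x := congrFun (del_const_mul (τ w) u (del h w v)) x
  calc |del h u (del h w v) x|
      = |τ w|⁻¹ * |del h u (dbar h τ₀ τ (Sum.inl ⟨w, hw⟩ : Dir L1) v) x| := by
        rw [hdbar, abs_mul, inv_mul_cancel_left₀ (abs_ne_zero.2 (hτ w hw))]
    _ ≤ _ := by gcongr; exact inv_abs_le_weightBound hw

end WeightedDifferences

section DiffBounds

/-- Bounds at the point `x` for the differences of `φ` entering (3.24.01): `α` and `β` bound the
`Λ₁`-differences of `δ̄φ` and `δ̄δ̄φ`, which `𝒬` controls in the nondegenerate case, and `ε` bounds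
`δ̄δ̄φ` itself. -/
structure DiffBounds (h τ₀ : ℝ) (τ : Vec d → ℝ) (L1 : Finset (Vec d)) (φ : Vec d → ℝ)
    (x : Vec d) (α β ε : ℝ) : Prop where
  α_nonneg : 0 ≤ α
  β_nonneg : 0 ≤ β
  ε_nonneg : 0 ≤ ε
  abs_del_dbar_le : ∀ u ∈ L1, ∀ a : Dir L1, |del h u (dbar h τ₀ τ a φ) x| ≤ α
  abs_del_dbar_dbar_le : ∀ u ∈ L1, ∀ a b : Dir L1,
    |del h u (dbar h τ₀ τ a (dbar h τ₀ τ b φ)) x| ≤ β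
  abs_dbar_dbar_le : ∀ a b : Dir L1, |dbar h τ₀ τ a (dbar h τ₀ τ b φ) x| ≤ ε

namespace DiffBounds

variable {φ : Vec d → ℝ} {x : Vec d} {α β ε : ℝ}

lemma abs_del_del_le (H : DiffBounds h τ₀ τ L1 φ x α β ε) (hτ : ∀ l ∈ L1, τ l ≠ 0)
    {u w : Vec d} (hu : u ∈ L1) (hw : w ∈ L1) :
    |del h u (del h w φ) x| ≤ weightBound L1 τ * α :=
  (abs_del_del_le_mul hτ u hw φ x).trans
    (mul_le_mul_of_nonneg_left (H.abs_del_dbar_le u hu _) weightBound_pos.le)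

lemma abs_del_del_dbar_le (H : DiffBounds h τ₀ τ L1 φ x α β ε) (hτ : ∀ l ∈ L1, τ l ≠ 0)
    {u w : Vec d} (hu : u ∈ L1) (hw : w ∈ L1) (b : Dir L1) :
    |del h u (del h w (dbar h τ₀ τ b φ)) x| ≤ weightBound L1 τ * β :=
  (abs_del_del_le_mul hτ u hw _ x).trans
    (mul_le_mul_of_nonneg_left (H.abs_del_dbar_dbar_le u hu _ b) weightBound_pos.le)

lemma abs_del_del_del_le (H : DiffBounds h τ₀ τ L1 φ x α β ε) (hτ : ∀ l ∈ L1, τ l ≠ 0)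
    {u w z : Vec d} (hu : u ∈ L1) (hw : w ∈ L1) (hz : z ∈ L1) :
    |del h u (del h w (del h z φ)) x| ≤ weightBound L1 τ ^ 2 * β := by
  have hdbar : del h u (del h w (dbar h τ₀ τ (Sum.inl ⟨z, hz⟩ : Dir L1) φ)) x =
      τ z * del h u (del h w (del h z φ)) x := by
    simp only [dbar, del_const_mul]
  have hle := H.abs_del_del_dbar_le hτ hu hw (Sum.inl ⟨z, hz⟩)
  have hA := weightBound_pos (L1 := L1) (τ := τ)
  calc |del h u (del h w (del h z φ)) x|
      = |τ z|⁻¹ * |del h u (del h w (dbar h τ₀ τ (Sum.inl ⟨z, hz⟩ : Dir L1) φ)) x| := by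
        rw [hdbar, abs_mul, inv_mul_cancel_left₀ (abs_ne_zero.2 (hτ z hz))]
    _ ≤ weightBound L1 τ * (weightBound L1 τ * β) :=
        mul_le_mul (inv_abs_le_weightBound hz) hle (abs_nonneg _) hA.le
    _ = weightBound L1 τ ^ 2 * β := by ring

lemma abs_dbar_inl_dbar_le (H : DiffBounds h τ₀ τ L1 φ x α β ε) (l : L1t L1) (b : Dir L1) :
    |dbar h τ₀ τ (Sum.inl l : Dir L1) (dbar h τ₀ τ b φ) x| ≤ weightBound L1 τ * α := by
  simp only [dbar, abs_mul]
  exact mul_le_mul (abs_le_weightBound l.2) (H.abs_del_dbar_le l.1 l.2 b) (abs_nonneg _)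
    weightBound_pos.le

/-- Only for two directions in `Λ₂` does `𝒬` fail to control `δ̄δ̄φ`; there the weight `dirNorm`
contributes the factor `τ₀`, which can be chosen small. -/
lemma dirNorm_mul_abs_dbar_dbar_le (H : DiffBounds h τ₀ τ L1 φ x α β ε) (hτ₀ : |τ₀| ≤ 1)
    (hφ : Differentiable ℝ φ) (a b : Dir L1) :
    dirNorm τ₀ τ a * |dbar h τ₀ τ a (dbar h τ₀ τ b φ) x| ≤
      weightBound L1 τ ^ 2 * (α + |τ₀| * ε) := by
  have hα := H.α_nonneg
  have hε := H.ε_nonneg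
  have hA := weightBound_pos (L1 := L1) (τ := τ)
  have of_le (hle : |dbar h τ₀ τ a (dbar h τ₀ τ b φ) x| ≤ weightBound L1 τ * α) :
      dirNorm τ₀ τ a * |dbar h τ₀ τ a (dbar h τ₀ τ b φ) x| ≤
        weightBound L1 τ ^ 2 * (α + |τ₀| * ε) :=
    calc _ ≤ weightBound L1 τ * (weightBound L1 τ * α) :=
          mul_le_mul (dirNorm_le_weightBound hτ₀ a) hle (abs_nonneg _) hA.le
      _ = weightBound L1 τ ^ 2 * α := by ring
      _ ≤ _ := by gcongr; exact le_add_of_nonneg_right (by positivity)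
  rcases a with l | i
  · exact of_le (H.abs_dbar_inl_dbar_le l b)
  rcases b with l | j
  · exact of_le (dbar_inr_dbar_inl hφ i l x ▸ H.abs_dbar_inl_dbar_le l _)
  · calc |τ₀| * |dbar h τ₀ τ (Sum.inr i) (dbar h τ₀ τ (Sum.inr j) φ) x|
        ≤ α + |τ₀| * ε := by
          linarith [mul_le_mul_of_nonneg_left
            (H.abs_dbar_dbar_le (Sum.inr i) (Sum.inr j)) (abs_nonneg τ₀)]
      _ ≤ _ := le_mul_of_one_le_left (by positivity) (one_le_pow₀ one_le_weightBound)

end DiffBounds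

variable {qt pt : Vec d → Vec d → ℝ} {k : ℝ} {x : Vec d}

lemma mul_sq_del_le_Qform (hk : 0 ≤ k) (hχ : ∀ l ∈ L1, k ≤ qt l x + h * pt l x)
    (ψ : Vec d → ℝ) {u : Vec d} (hu : u ∈ L1) :
    k * del h u ψ x ^ 2 ≤ Qform h L1 qt pt ψ x :=
  (mul_le_mul_of_nonneg_right (hχ u hu) (sq_nonneg _)).trans <|
    Finset.single_le_sum (f := fun l => (qt l x + h * pt l x) * del h l ψ x ^ 2)
      (fun l hl => mul_nonneg (hk.trans (hχ l hl)) (sq_nonneg _)) hu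

lemma Qform_nonneg (hχ : ∀ l ∈ L1, 0 ≤ qt l x + h * pt l x) (ψ : Vec d → ℝ) :
    0 ≤ Qform h L1 qt pt ψ x :=
  Finset.sum_nonneg fun l hl => mul_nonneg (hχ l hl) (sq_nonneg _)

lemma abs_del_le_sqrt_sum_Qform {ι : Type*} [Fintype ι] (hk : 0 < k)
    (hχ : ∀ l ∈ L1, k ≤ qt l x + h * pt l x) (ψ : ι → Vec d → ℝ) (i : ι) {u : Vec d}
    (hu : u ∈ L1) :
    |del h u (ψ i) x| ≤ √((∑ j, Qform h L1 qt pt (ψ j) x) / k) := by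
  refine Real.abs_le_sqrt ((le_div_iff₀' hk).2 ((mul_sq_del_le_Qform hk.le hχ _ hu).trans ?_))
  exact Finset.single_le_sum (f := fun j => Qform h L1 qt pt (ψ j) x)
    (fun j _ => Qform_nonneg (fun l hl => hk.le.trans (hχ l hl)) _) (Finset.mem_univ i)

lemma exists_diffBounds (hk : 0 < k) (hχ : ∀ l ∈ L1, k ≤ qt l x + h * pt l x)
    (φ : Vec d → ℝ) :
    ∃ α β ε, DiffBounds h τ₀ τ L1 φ x α β ε ∧
      k * α ^ 2 = ∑ a : Dir L1, Qform h L1 qt pt (dbar h τ₀ τ a φ) x ∧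
      k * β ^ 2 = ∑ lam : Fin 2 → Dir L1, Qform h L1 qt pt (dbarT h τ₀ τ lam φ) x ∧
      ε ^ 2 = ∑ lam : Fin 2 → Dir L1, dbarT h τ₀ τ lam φ x ^ 2 := by
  have hQ : ∀ ψ, 0 ≤ Qform h L1 qt pt ψ x :=
    Qform_nonneg fun l hl => hk.le.trans (hχ l hl)
  have mul_sq_sqrt {S : ℝ} (hS : 0 ≤ S) : k * √(S / k) ^ 2 = S := by
    rw [Real.sq_sqrt (by positivity), mul_div_cancel₀ _ hk.ne']
  refine ⟨_, _, _,
    ⟨Real.sqrt_nonneg _, Real.sqrt_nonneg _, Real.sqrt_nonneg _,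
      fun u hu a => abs_del_le_sqrt_sum_Qform hk hχ (fun a => dbar h τ₀ τ a φ) a hu,
      fun u hu a b => ?_, fun a b => Real.abs_le_sqrt ?_⟩,
    mul_sq_sqrt (Finset.sum_nonneg fun _ _ => hQ _),
    mul_sq_sqrt (Finset.sum_nonneg fun _ _ => hQ _),
    Real.sq_sqrt (Finset.sum_nonneg fun _ _ => sq_nonneg _)⟩
  · simpa only [dbarT_two, Matrix.cons_val_zero, Matrix.cons_val_one] using
      abs_del_le_sqrt_sum_Qform hk hχ (fun lam : Fin 2 → Dir L1 => dbarT h τ₀ τ lam φ) ![a, b] hu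
  · simpa only [dbarT_two, Matrix.cons_val_zero, Matrix.cons_val_one] using
      Finset.single_le_sum (f := fun lam : Fin 2 → Dir L1 => dbarT h τ₀ τ lam φ x ^ 2)
        (fun _ _ => sq_nonneg _) (Finset.mem_univ ![a, b])

end DiffBounds

section Coefficients

/-- Coefficients `q`, `p` at a fixed time that satisfy condition (S′), the lower bound `q ≥ κ`, and
the part of Assumption A1(2) that the estimate needs, with the single bound `B`. -/
structure IsSymmElliptic (L1 : Finset (Vec d)) (qt pt : Vec d → Vec d → ℝ) (B κ : ℝ) :
    Prop where
  neg_mem : ∀ l ∈ L1, -l ∈ L1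
  contDiff_q : ∀ l ∈ L1, ContDiff ℝ 2 (qt l)
  differentiable_p : ∀ l ∈ L1, Differentiable ℝ (pt l)
  fderiv_q_eq_neg : ∀ l ∈ L1, ∀ x, fderiv ℝ (qt l) x = fderiv ℝ (qt (-l)) x
  norm_fderiv_q_le : ∀ l ∈ L1, ∀ x, ‖fderiv ℝ (qt l) x‖ ≤ B
  norm_fderiv_fderiv_q_le : ∀ l ∈ L1, ∀ x, ‖fderiv ℝ (fderiv ℝ (qt l)) x‖ ≤ B
  abs_p_le : ∀ l ∈ L1, ∀ x, |pt l x| ≤ B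
  norm_fderiv_p_le : ∀ l ∈ L1, ∀ x, ‖fderiv ℝ (pt l) x‖ ≤ B
  le_q : ∀ l ∈ L1, ∀ x, κ ≤ qt l x

variable {T : ℝ} {m : ℕ} {q p : Vec d → ℝ → Vec d → ℝ} {c : ℝ → Vec d → ℝ} {M : ℕ → ℝ}

lemma CoefReg.norm_iteratedFDeriv_le (H : CoefReg T L1 m q p c M) {k : ℕ} (hk : k ≤ m)
    {l : Vec d} (hl : l ∈ L1) {t : ℝ} (ht : t ∈ Set.Icc 0 T) (x : Vec d) :
    ‖iteratedFDeriv ℝ k (q l t) x‖ ≤ |M k| ∧ ‖iteratedFDeriv ℝ k (p l t) x‖ ≤ |M k| := by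
  have hterm := Finset.single_le_sum
    (f := fun l => ‖iteratedFDeriv ℝ k (q l t) x‖ ^ 2 + ‖iteratedFDeriv ℝ k (p l t) x‖ ^ 2)
    (fun _ _ => by positivity) hl
  have hsum := H.2.2.2.2 k hk t ht x
  constructor <;> refine (le_abs_self _).trans (sq_le_sq.1 ?_) <;>
    linarith [sq_nonneg ‖iteratedFDeriv ℝ k (q l t) x‖, sq_nonneg ‖iteratedFDeriv ℝ k (p l t) x‖,
      sq_nonneg ‖iteratedFDeriv ℝ k (c t) x‖]

lemma CoefReg.exists_isSymmElliptic (H : CoefReg T L1 m q p c M) (hm : 2 ≤ m)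
    (hS : ∀ l ∈ L1, -l ∈ L1 ∧ ∀ t ∈ Set.Icc (0 : ℝ) T, ∀ x,
      fderiv ℝ (q l t) x = fderiv ℝ (q (-l) t) x)
    {κ : ℝ} (hq : ∀ l ∈ L1, ∀ t ∈ Set.Icc (0 : ℝ) T, ∀ x, κ ≤ q l t x) :
    ∃ B > 0, ∀ t ∈ Set.Icc (0 : ℝ) T,
      IsSymmElliptic L1 (fun l => q l t) (fun l => p l t) B κ := by
  have hM : ∀ k ≤ 2, |M k| ≤ 1 + |M 0| + |M 1| + |M 2| := fun k hk => by
    interval_cases k <;> linarith [abs_nonneg (M 0), abs_nonneg (M 1), abs_nonneg (M 2)]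
  have h2m : (2 : WithTop ℕ∞) ≤ (m : ℕ∞) :=
    WithTop.coe_le_coe.2 (show ((2 : ℕ) : ℕ∞) ≤ m from Nat.cast_le.2 hm)
  have bound {k : ℕ} (hk : k ≤ 2) {l : Vec d} (hl : l ∈ L1) {t : ℝ} (ht : t ∈ Set.Icc 0 T)
      (x : Vec d) :=
    (H.norm_iteratedFDeriv_le (hk.trans hm) hl ht x).imp
      (·.trans (hM k hk)) (·.trans (hM k hk))
  refine ⟨1 + |M 0| + |M 1| + |M 2|, by positivity, fun t ht =>
    { neg_mem := fun l hl => (hS l hl).1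
      contDiff_q := fun l hl => (H.1 l hl t ht).1.of_le h2m
      differentiable_p := fun l hl =>
        ((H.1 l hl t ht).2.of_le h2m).differentiable (by norm_num)
      fderiv_q_eq_neg := fun l hl => (hS l hl).2 t ht
      norm_fderiv_q_le := fun l hl x => ?_
      norm_fderiv_fderiv_q_le := fun l hl x => ?_
      abs_p_le := fun l hl x => ?_
      norm_fderiv_p_le := fun l hl x => ?_
      le_q := fun l hl => hq l hl t ht }⟩
  · rw [← norm_iteratedFDeriv_one]
    exact (bound (by norm_num) hl ht x).1
  · rw [← norm_iteratedFDeriv_one, norm_iteratedFDeriv_fderiv]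
    exact (bound le_rfl hl ht x).1
  · rw [← Real.norm_eq_abs, ← norm_iteratedFDeriv_zero (𝕜 := ℝ)]
    exact (bound (by norm_num) hl ht x).2
  · rw [← norm_iteratedFDeriv_one]
    exact (bound (by norm_num) hl ht x).2

namespace IsSymmElliptic

variable {qt pt : Vec d → Vec d → ℝ} {B κ : ℝ}

lemma half_le_chi (H : IsSymmElliptic L1 qt pt B κ) (hh : 0 ≤ h) (hhB : h * B ≤ κ / 2)
    {l : Vec d} (hl : l ∈ L1) (x : Vec d) : κ / 2 ≤ qt l x + h * pt l x := by
  have hp : -(h * B) ≤ h * pt l x := by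
    rw [← mul_neg]
    exact mul_le_mul_of_nonneg_left (abs_le.1 (H.abs_p_le l hl x)).1 hh
  linarith [H.le_q l hl x]

lemma dbar_q_eq_neg (H : IsSymmElliptic L1 qt pt B κ) (a : Dir L1) {l : Vec d} (hl : l ∈ L1) :
    dbar h τ₀ τ a (qt l) = dbar h τ₀ τ a (qt (-l)) :=
  dbar_eq_of_fderiv_eq ((H.contDiff_q l hl).differentiable (by norm_num))
    ((H.contDiff_q (-l) (H.neg_mem l hl)).differentiable (by norm_num))
    (H.fderiv_q_eq_neg l hl) a

lemma abs_dbar_q_le (H : IsSymmElliptic L1 qt pt B κ) (a : Dir L1) {l : Vec d} (hl : l ∈ L1)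
    (x : Vec d) : |dbar h τ₀ τ a (qt l) x| ≤ dirNorm τ₀ τ a * B :=
  abs_dbar_le ((H.contDiff_q l hl).differentiable (by norm_num)) (H.norm_fderiv_q_le l hl) a x

lemma abs_dbar_p_le (H : IsSymmElliptic L1 qt pt B κ) (a : Dir L1) {l : Vec d} (hl : l ∈ L1)
    (x : Vec d) : |dbar h τ₀ τ a (pt l) x| ≤ dirNorm τ₀ τ a * B :=
  abs_dbar_le (H.differentiable_p l hl) (H.norm_fderiv_p_le l hl) a x

lemma abs_dbar_dbar_q_le (H : IsSymmElliptic L1 qt pt B κ) (a b : Dir L1) {l : Vec d}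
    (hl : l ∈ L1) (x : Vec d) :
    |dbar h τ₀ τ a (dbar h τ₀ τ b (qt l)) x| ≤ dirNorm τ₀ τ a * (dirNorm τ₀ τ b * B) :=
  abs_dbar_dbar_le (H.contDiff_q l hl) (H.norm_fderiv_fderiv_q_le l hl) a b x

end IsSymmElliptic

end Coefficients

section CrossTerms

lemma abs_sum_mul_le {ι : Type*} (s : Finset ι) {f g : ι → ℝ} {F G : ℝ}
    (hf : ∀ i ∈ s, |f i| ≤ F) (hg : ∀ i ∈ s, |g i| ≤ G) :
    |∑ i ∈ s, f i * g i| ≤ s.card * (F * G) :=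
  calc |∑ i ∈ s, f i * g i| ≤ ∑ i ∈ s, |f i * g i| := Finset.abs_sum_le_sum_abs _ _
    _ ≤ s.card • (F * G) := Finset.sum_le_card_nsmul _ _ _ fun i hi => by
        rw [abs_mul]
        exact mul_le_mul (hf i hi) (hg i hi) (abs_nonneg _) ((abs_nonneg _).trans (hf i hi))
    _ = s.card * (F * G) := nsmul_eq_mul _ _

/-- The constant in the bounds for `L⁰_λ T_λ δ̄φ` and `Q_λ T_λ φ`. -/
def operatorConst (L1 : Finset (Vec d)) (τ : Vec d → ℝ) (B : ℝ) : ℝ :=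
  3 * L1.card * B * weightBound L1 τ ^ 3

lemma operatorConst_nonneg {B : ℝ} (hB : 0 ≤ B) : 0 ≤ operatorConst L1 τ B := by
  have hA := weightBound_pos (L1 := L1) (τ := τ)
  unfold operatorConst
  positivity

variable {qt pt : Vec d → Vec d → ℝ} {B κ α β ε : ℝ} {φ : Vec d → ℝ} {x : Vec d}

lemma abs_L0mu_shiftD_dbar_le (H : IsSymmElliptic L1 qt pt B κ)
    (D : DiffBounds h τ₀ τ L1 φ x α β ε) (hB : 0 ≤ B) (hτ : ∀ l ∈ L1, τ l ≠ 0)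
    (hh : 0 < h) (hh1 : h ≤ 1) (a b : Dir L1) :
    |L0mu h τ₀ τ L1 qt pt ![a] (shiftD h a (dbar h τ₀ τ b φ)) x| ≤
      dirNorm τ₀ τ a * (operatorConst L1 τ B * (α + β)) := by
  have hδδ {u w : Vec d} (hu : u ∈ L1) (hw : w ∈ L1) := D.abs_del_del_dbar_le hτ hu hw b
  have hα := D.α_nonneg
  have hβ := D.β_nonneg
  have hw := dirNorm_nonneg (τ₀ := τ₀) (τ := τ) a
  have hA1 := one_le_weightBound (L1 := L1) (τ := τ)
  have hQ := abs_sum_mul_le L1 (fun l hl => H.abs_dbar_q_le (h := h) (τ₀ := τ₀) (τ := τ) a hl x)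
    (fun l hl => abs_del2_shiftD_le hh.ne' H.neg_mem (fun u hu w hw => hδδ hu hw) a hl)
  have hP := abs_sum_mul_le L1 (fun l hl => H.abs_dbar_p_le (h := h) (τ₀ := τ₀) (τ := τ) a hl x)
    (fun l hl => abs_del_shiftD_le hh hh1 (fun u hu => D.abs_del_dbar_le u hu b)
      (fun u hu w hw => hδδ hu hw) a hl)
  set A := weightBound L1 τ
  simp only [L0mu, Qmu, Pmu, dbarT_one]
  rw [inv_mul_sum_mul_del_eq H.neg_mem (fun l hl => congrFun (H.dbar_q_eq_neg a hl) x)]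
  refine (abs_add_le _ _).trans ?_
  rw [abs_mul, abs_of_pos (one_half_pos (α := ℝ))]
  have hαA : α ≤ 3 * A ^ 3 * α := le_mul_of_one_le_left hα (by linarith [one_le_pow₀ hA1 (n := 3)])
  have hAβ : A * β ≤ A ^ 3 * β := by gcongr; exact le_self_pow₀ hA1 (by norm_num)
  calc _ ≤ 1 / 2 * (L1.card * (dirNorm τ₀ τ a * B * (3 * (A * β)))) +
          L1.card * (dirNorm τ₀ τ a * B * (α + A * β)) := by gcongr
    _ = L1.card * (dirNorm τ₀ τ a * B) * (α + 5 / 2 * (A * β)) := by ring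
    _ ≤ L1.card * (dirNorm τ₀ τ a * B) * (3 * A ^ 3 * α + 3 * (A ^ 3 * β)) := by
        gcongr
        linarith [show 0 ≤ A * β by positivity]
    _ = _ := by rw [operatorConst]; ring

lemma abs_Qmu_shiftT_le (H : IsSymmElliptic L1 qt pt B κ)
    (D : DiffBounds h τ₀ τ L1 φ x α β ε) (hB : 0 ≤ B) (hτ : ∀ l ∈ L1, τ l ≠ 0)
    (hτ₀ : |τ₀| ≤ 1) (hh : 0 < h) (hh1 : h ≤ 1) (lam : Fin 2 → Dir L1) :
    |Qmu h τ₀ τ L1 qt lam (shiftT h lam φ) x| ≤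
      dirNorm τ₀ τ (lam 0) * (operatorConst L1 τ B * (α + β)) := by
  have hα := D.α_nonneg
  have hβ := D.β_nonneg
  have hw₀ := dirNorm_nonneg (τ₀ := τ₀) (τ := τ) (lam 0)
  have hw₁ := dirNorm_le_weightBound (τ := τ) hτ₀ (lam 1)
  have hA1 := one_le_weightBound (L1 := L1) (τ := τ)
  have hQ := abs_sum_mul_le L1
    (fun l hl => H.abs_dbar_dbar_q_le (h := h) (τ₀ := τ₀) (τ := τ) (lam 0) (lam 1) hl x)
    (fun l hl => abs_del2_shiftD_shiftD_le hh hh1 H.neg_mem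
      (fun u hu w hw => D.abs_del_del_le hτ hu hw)
      (fun u hu w hw z hz => D.abs_del_del_del_le hτ hu hw hz) (lam 0) (lam 1) hl)
  set A := weightBound L1 τ
  simp only [Qmu, dbarT_two, shiftT_two]
  rw [inv_mul_sum_mul_del_eq H.neg_mem (fun l hl => by rw [H.dbar_q_eq_neg (lam 1) hl]), abs_mul,
    abs_of_pos (one_half_pos (α := ℝ))]
  have hAα : A * α ≤ A ^ 2 * α := by gcongr; exact le_self_pow₀ hA1 (by norm_num)
  calc _ ≤ 1 / 2 *
        (L1.card * (dirNorm τ₀ τ (lam 0) * (A * B) * (3 * (A ^ 2 * α + A ^ 2 * β)))) := by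
        refine mul_le_mul_of_nonneg_left (hQ.trans ?_) one_half_pos.le
        gcongr
    _ = 1 / 2 * (dirNorm τ₀ τ (lam 0) * (operatorConst L1 τ B * (α + β))) := by
        rw [operatorConst]; ring
    _ ≤ _ := mul_le_of_le_one_left
        (mul_nonneg hw₀ (mul_nonneg (operatorConst_nonneg hB) (by positivity))) (by norm_num)

/-- The constant in the bound for the left-hand side of (3.24.01), uniform in `n ≤ m`. -/
def crossConst (L1 : Finset (Vec d)) (τ : Vec d → ℝ) (B : ℝ) (m : ℕ) : ℝ :=
  m * (m + 1) * Fintype.card (Dir L1) ^ 2 * (weightBound L1 τ ^ 2 * operatorConst L1 τ B)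

lemma crossConst_nonneg {m : ℕ} (hB : 0 ≤ B) : 0 ≤ crossConst L1 τ B m := by
  have := operatorConst_nonneg (L1 := L1) (τ := τ) hB
  unfold crossConst
  positivity

lemma DiffBounds.dbar_dbar_mul_le (D : DiffBounds h τ₀ τ L1 φ x α β ε) (hτ₀ : |τ₀| ≤ 1)
    (hφ : Differentiable ℝ φ) (a b : Dir L1) {y Y : ℝ} (hY : 0 ≤ Y)
    (hy : |y| ≤ dirNorm τ₀ τ a * Y) :
    dbar h τ₀ τ a (dbar h τ₀ τ b φ) x * y ≤
      weightBound L1 τ ^ 2 * (α + |τ₀| * ε) * Y :=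
  calc dbar h τ₀ τ a (dbar h τ₀ τ b φ) x * y
      ≤ |dbar h τ₀ τ a (dbar h τ₀ τ b φ) x| * |y| := (le_abs_self _).trans_eq (abs_mul _ _)
    _ ≤ |dbar h τ₀ τ a (dbar h τ₀ τ b φ) x| * (dirNorm τ₀ τ a * Y) := by gcongr
    _ = dirNorm τ₀ τ a * |dbar h τ₀ τ a (dbar h τ₀ τ b φ) x| * Y := by ring
    _ ≤ _ := mul_le_mul_of_nonneg_right (D.dirNorm_mul_abs_dbar_dbar_le hτ₀ hφ a b) hY

lemma A1form_add_Qmu_le (H : IsSymmElliptic L1 qt pt B κ)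
    (D : DiffBounds h τ₀ τ L1 φ x α β ε) (hB : 0 ≤ B) (hτ : ∀ l ∈ L1, τ l ≠ 0)
    (hτ₀ : |τ₀| ≤ 1) (hh : 0 < h) (hh1 : h ≤ 1) (hφ : Differentiable ℝ φ) {n m : ℕ}
    (hnm : n ≤ m) :
    (n : ℝ) * (∑ a : Dir L1, A1form h τ₀ τ L1 qt pt (dbar h τ₀ τ a φ) x) +
      (n : ℝ) * ((n : ℝ) - 1) * (∑ lam : Fin 2 → Dir L1,
        dbarT h τ₀ τ lam φ x * Qmu h τ₀ τ L1 qt lam (shiftT h lam φ) x) ≤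
    crossConst L1 τ B m * ((α + |τ₀| * ε) * (α + β)) := by
  have hY : 0 ≤ operatorConst L1 τ B * (α + β) :=
    mul_nonneg (operatorConst_nonneg hB) (add_nonneg D.α_nonneg D.β_nonneg)
  set N : ℝ := (Fintype.card (Dir L1) : ℝ) with hN
  set X := weightBound L1 τ ^ 2 * (α + |τ₀| * ε) * (operatorConst L1 τ B * (α + β)) with hX
  have hX₀ : 0 ≤ X := by
    have := D.α_nonneg
    have := D.ε_nonneg
    positivity
  have hA1form : ∑ a : Dir L1, A1form h τ₀ τ L1 qt pt (dbar h τ₀ τ a φ) x ≤ 2 * N ^ 2 * X :=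
    calc _ ≤ ∑ _b : Dir L1, 2 * ∑ _a : Dir L1, X := by
          unfold A1form
          gcongr with b _ a _
          exact D.dbar_dbar_mul_le hτ₀ hφ a b hY (abs_L0mu_shiftD_dbar_le H D hB hτ hh hh1 a b)
      _ = 2 * N ^ 2 * X := by
          simp only [Finset.sum_const, Finset.card_univ, nsmul_eq_mul, hN]
          ring
  have hQmu : ∑ lam : Fin 2 → Dir L1,
      dbarT h τ₀ τ lam φ x * Qmu h τ₀ τ L1 qt lam (shiftT h lam φ) x ≤ N ^ 2 * X :=
    calc _ ≤ ∑ _lam : Fin 2 → Dir L1, X := by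
          gcongr with lam
          rw [dbarT_two]
          exact D.dbar_dbar_mul_le hτ₀ hφ _ _ hY (abs_Qmu_shiftT_le H D hB hτ hτ₀ hh hh1 lam)
      _ = N ^ 2 * X := by
          simp only [Finset.sum_const, Finset.card_univ, nsmul_eq_mul, Fintype.card_fun,
            Fintype.card_fin, Nat.cast_pow, hN]
  have hnn : 0 ≤ (n : ℝ) * ((n : ℝ) - 1) := by
    rcases n.eq_zero_or_pos with rfl | hn
    · simp
    · exact mul_nonneg n.cast_nonneg (sub_nonneg.2 (mod_cast hn))
  calc _ ≤ n * (2 * N ^ 2 * X) + n * (n - 1) * (N ^ 2 * X) := by gcongr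
    _ = n * (n + 1) * (N ^ 2 * X) := by ring
    _ ≤ m * (m + 1) * (N ^ 2 * X) := by gcongr
    _ = _ := by rw [crossConst, hX]; ring

end CrossTerms

lemma mul_le_add_sq {θ : ℝ} (hθ : 0 < θ) (y z : ℝ) :
    y * z ≤ θ / 2 * y ^ 2 + z ^ 2 / (2 * θ) := by
  have hsq : θ / 2 * y ^ 2 + z ^ 2 / (2 * θ) - y * z = (θ * y - z) ^ 2 / (2 * θ) := by
    field_simp
    ring
  linarith [show 0 ≤ (θ * y - z) ^ 2 / (2 * θ) by positivity]

lemma mul_add_mul_add_le_of_sq_le {C s a b e θ σ : ℝ} (hθ : 0 < θ) (hs : (C * s) ^ 2 ≤ θ * σ) :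
    C * ((a + s * e) * (a + b)) ≤
      θ * b ^ 2 + (C + C ^ 2 / (2 * θ) + θ / 2) * a ^ 2 + σ * e ^ 2 := by
  have hab := mul_le_add_sq hθ b (C * a)
  have hbe := mul_le_add_sq hθ b (C * s * e)
  have hae := mul_le_add_sq hθ a (C * s * e)
  have he : (C * s * e) ^ 2 / (2 * θ) ≤ σ / 2 * e ^ 2 := by
    rw [div_le_iff₀ (by positivity), mul_pow]
    linarith [mul_le_mul_of_nonneg_right hs (sq_nonneg e)]
  have hsplit : (C * a) ^ 2 / (2 * θ) = C ^ 2 / (2 * θ) * a ^ 2 := by ring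
  linarith

lemma exists_pos_le_one_sq_mul_le (C : ℝ) {s : ℝ} (hs : 0 < s) :
    ∃ r > 0, r ≤ 1 ∧ (C * r) ^ 2 ≤ s := by
  have hlim : Filter.Tendsto (fun r : ℝ => (C * r) ^ 2) (nhdsWithin 0 (Set.Ioi 0)) (nhds 0) := by
    have hcont : Continuous fun r : ℝ => (C * r) ^ 2 := by fun_prop
    simpa using (hcont.tendsto 0).mono_left nhdsWithin_le_nhds
  obtain ⟨r, hrs, hr⟩ :=
    ((hlim.eventually_le_const hs).and (Ioc_mem_nhdsGT zero_lt_one)).exists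
  exact ⟨r, hr.1, hr.2, hrs⟩

lemma memFrakK_id : MemFrakK (d := d) id :=
  ⟨fun _ hmeas hbdd => ⟨hmeas, hbdd⟩, fun _ hφ => hφ, fun _ => le_rfl⟩

end GK

open GK in
theorem stmt12_general {d : ℕ} (L1 : Finset (Vec d)) (τ : Vec d → ℝ) (hτ : ∀ l ∈ L1, τ l ≠ 0)
    {c₀ B κ : ℝ} (hc₀ : 0 < c₀) (hB : 0 < B) (hκ : 0 < κ) (m : ℕ) {δ : ℝ} (hδ : δ < 1) :
    ∃ τ₀ > (0 : ℝ), ∃ h₁ > (0 : ℝ), ∃ K₁ : ℝ,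
      ∀ qt pt : Vec d → Vec d → ℝ, IsSymmElliptic L1 qt pt B κ →
        ∀ h ∈ Set.Ioc (0 : ℝ) h₁, ∀ n ≤ m, ∀ φ : Vec d → ℝ, ContDiff ℝ 2 φ →
          ∀ (ct : Vec d → ℝ) (x : Vec d), c₀ ≤ ct x →
            IneqA5 h τ₀ τ L1 qt pt ct δ K₁ n id φ x := by
  have : 0 < 1 - δ := sub_pos.2 hδ
  set θ := (1 - δ) * (κ / 2) with hθdef
  have hθ : 0 < θ := by positivity
  set C := crossConst L1 τ B m
  have hC : 0 ≤ C := crossConst_nonneg hB.le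
  obtain ⟨τ₀, hτ₀, hτ₀1, hCτ₀⟩ :=
    exists_pos_le_one_sq_mul_le C (show 0 < θ * (2 * (1 - δ) * c₀) by positivity)
  set K := C + C ^ 2 / (2 * θ) + θ / 2
  refine ⟨τ₀, hτ₀, min 1 (κ / 2 / B), by positivity, K / (κ / 2),
    fun qt pt H h hh n hn φ hφ ct x hct => ?_⟩
  obtain ⟨hh1, hhB⟩ := le_min_iff.1 hh.2
  obtain ⟨α, β, ε, D, hα, hβ, hε⟩ := exists_diffBounds (τ₀ := τ₀) (τ := τ) (half_pos hκ)
    (fun l hl => H.half_le_chi hh.1.le ((le_div_iff₀ hB).1 hhB) hl x) φ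
  have hcross := A1form_add_Qmu_le H D hB.le hτ (by rwa [abs_of_pos hτ₀]) hh.1 hh1
    (hφ.differentiable (by norm_num)) hn
  have hyoung : C * ((α + τ₀ * ε) * (α + β)) ≤
      θ * β ^ 2 + K * α ^ 2 + 2 * (1 - δ) * c₀ * ε ^ 2 := mul_add_mul_add_le_of_sq_le hθ hCτ₀
  have hrest : 0 ≤ K / (κ / 2) * ∑ a : Dir L1, dbar h τ₀ τ a φ x ^ 2 := by positivity
  have hK : K / (κ / 2) * (κ / 2 * α ^ 2) = K * α ^ 2 := by field_simp
  have hcε : 2 * (1 - δ) * c₀ * ε ^ 2 ≤ 2 * (1 - δ) * ct x * ε ^ 2 := by gcongr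
  rw [abs_of_pos hτ₀] at hcross
  simp only [IneqA5, id]
  rw [← hα, ← hβ, ← hε, hK, ← mul_assoc, ← hθdef]
  refine (hcross.trans hyoung).trans ?_
  linarith

open GK in
/-- Remark 2.2, second claim: under (S′), `τ_λ > 0` and `q_λ ≥ κ > 0`, for any
`δ ∈ (0,1)` the inequalities (3.24.01) (Assumption A5) hold for suitable `τ₀ > 0`,
small enough `h₀'` and appropriate `K₁`, with operators `𝒦 ∈ 𝔎`. -/
theorem stmt12 {d : ℕ} (L1 : Finset (Vec d)) (hL1 : (0 : Vec d) ∉ L1)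
    (τ : Vec d → ℝ) (hτ : ∀ l ∈ L1, 0 < τ l)
    (h₀ T : ℝ) (hh₀ : 0 < h₀) (hT : 0 < T)
    (c₀ : ℝ) (hc₀ : 0 < c₀) (m : ℕ) (hm : 2 ≤ m) (M : ℕ → ℝ)
    (q p : Vec d → ℝ → Vec d → ℝ) (c : ℝ → Vec d → ℝ)
    -- Assumption A1(m)
    (hA1 : CoefReg T L1 m q p c M)
    -- Assumption A2
    (hA2 : ∀ t ∈ Set.Icc (0 : ℝ) T, ∀ x y : Vec d,
      (∑ l ∈ L1, q l t x • l) = ∑ l ∈ L1, q l t y • l)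
    -- Assumption A3
    (hA3 : ∀ h ∈ Set.Ioc (0 : ℝ) h₀, ∀ l ∈ L1, ∀ t ∈ Set.Icc (0 : ℝ) T, ∀ x,
      0 ≤ q l t x + h * p l t x)
    (hc : ∀ t ∈ Set.Icc (0 : ℝ) T, ∀ x, c₀ ≤ c t x)
    -- condition (S′)
    (hS' : ∀ l ∈ L1, -l ∈ L1 ∧ ∀ t ∈ Set.Icc (0 : ℝ) T, ∀ x,
      fderiv ℝ (q l t) x = fderiv ℝ (q (-l) t) x)
    -- uniform nondegeneracy `q_λ ≥ κ > 0`
    (κ : ℝ) (hκ : 0 < κ)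
    (hq : ∀ l ∈ L1, ∀ t ∈ Set.Icc (0 : ℝ) T, ∀ x, κ ≤ q l t x) :
    ∀ δ ∈ Set.Ioo (0 : ℝ) 1, ∃ τ₀ > (0 : ℝ), ∃ h₀' ∈ Set.Ioc (0 : ℝ) h₀, ∃ K₁ : ℝ,
      ∀ h ∈ Set.Ioc (0 : ℝ) h₀', ∀ n : ℕ, 1 ≤ n → n ≤ m →
        ∀ φ : Vec d → ℝ, ContDiff ℝ (⊤ : ℕ∞) φ →
          ∃ K : (Vec d → ℝ) → Vec d → ℝ, MemFrakK K ∧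
            ∀ t ∈ Set.Icc (0 : ℝ) T, ∀ x,
              IneqA5 h τ₀ τ L1 (fun l => q l t) (fun l => p l t) (c t) δ K₁ n
                K φ x := by
  intro δ hδ
  obtain ⟨B, hB, hcoef⟩ := hA1.exists_isSymmElliptic hm hS' hq
  obtain ⟨τ₀, hτ₀, h₁, hh₁, K₁, hineq⟩ :=
    stmt12_general L1 τ (fun l hl => (hτ l hl).ne') hc₀ hB hκ m hδ.2
  exact ⟨τ₀, hτ₀, min h₀ h₁, ⟨lt_min hh₀ hh₁, min_le_left _ _⟩, K₁, fun h hh n _ hnm φ hφ =>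
    ⟨id, memFrakK_id, fun t ht x => hineq _ _ (hcoef t ht) h
      ⟨hh.1, hh.2.trans (min_le_right _ _)⟩ n hnm φ (contDiff_infty.1 hφ 2) _ x
      (hc t ht x)⟩⟩
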